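/- Assume X is nonempty closed convex, the connectivity and doubly stochastic weight assumptions hold, ‖∇f_i(x)‖ ≤ C_i for all x ∈ X, and the errors satisfy E[‖ε_{i,k+1}‖² | F_k] ≤ ν_i² almost surely for all i and k, where F_k is the σ-algebra generated by the errors up to time k. If Σ_{k=0}^{∞} α_{k+1}² < ∞, then with probability 1, Σ_{k=1}^{∞} α_{k+2} ‖y_{k+1} − w_{j,k+1}‖ < ∞ for all j ∈ V; furthermore, for all j ∈ V, lim_{k→∞} ‖y_{k+1} − w_{j,k+1}‖ = 0 with probability 1 and in mean square. -/

import Mathlib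

open Filter Finset MeasureTheory

/-!
Over `B = m * Q` steps the transition matrix of the network has all entries at least some `δ > 0`:
the set of agents influenced by a given agent grows in every window of length `Q` until it is
everything. Hence `B` steps contract the diameter of the agents' states by the factor `1 - δ`, up to
twice the sum of the deviations of the projected steps from pure averaging. By convexity of the
square, the squared diameter `x k` then satisfies `x (k + B) ≤ (1 - δ) * x k + c k`, with `c k`
proportional to the sum of the squared deviations over the window, so `∑ k, x k` is bounded by a
linear combination of `x 0` and the total squared deviation.

The projection costs at most a factor two, so the `k`-th squared deviation is at most
`8 * α (k + 1) ^ 2 * ∑ i, (C i ^ 2 + ‖ε i (k + 1)‖ ^ 2)`. As `∑ k, α (k + 1) ^ 2 < ∞`, the total is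
an integrable random variable. Therefore `∑ k, x k` is almost surely finite, which gives almost sure
consensus and, by Cauchy–Schwarz, the weighted sum; each `x k` is dominated by the integrable bound
on the total, which gives mean-square consensus.
-/

open scoped Matrix.Module

section Spread

variable {ι E : Type*} [NormedAddCommGroup E]

/-- The disagreement of a finite family of agents: the diameter of the set of their states. -/
noncomputable def spread (w : ι → E) : ℝ := Metric.diam (Set.range w)

lemma spread_nonneg (w : ι → E) : 0 ≤ spread w := Metric.diam_nonneg

lemma spread_le {w : ι → E} {r : ℝ} (hr : 0 ≤ r) (h : ∀ i j, ‖w i - w j‖ ≤ r) :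
    spread w ≤ r := by
  refine Metric.diam_le_of_forall_dist_le hr ?_
  rintro _ ⟨i, rfl⟩ _ ⟨j, rfl⟩
  exact (dist_eq_norm _ _).trans_le (h i j)

lemma norm_sub_le_spread [Finite ι] (w : ι → E) (i j : ι) : ‖w i - w j‖ ≤ spread w := by
  rw [← dist_eq_norm]
  exact Metric.dist_le_diam_of_mem (Set.finite_range w).isBounded
    (Set.mem_range_self i) (Set.mem_range_self j)

variable [Fintype ι]

lemma pi_norm_sq_le_sum_sq (u : ι → E) : ‖u‖ ^ 2 ≤ ∑ i, ‖u i‖ ^ 2 := by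
  have hsum : 0 ≤ ∑ i, ‖u i‖ ^ 2 := sum_nonneg fun i _ => sq_nonneg ‖u i‖
  rw [← Real.le_sqrt (norm_nonneg u) hsum]
  exact (pi_norm_le_iff_of_nonneg (Real.sqrt_nonneg _)).2 fun i => Real.le_sqrt_of_sq_le
    (single_le_sum (f := fun i => ‖u i‖ ^ 2) (fun i _ => sq_nonneg ‖u i‖) (mem_univ i))

lemma spread_le_add_norm_sub (u w : ι → E) : spread u ≤ spread w + 2 * ‖u - w‖ := by
  refine spread_le (add_nonneg (spread_nonneg w) (by positivity)) fun i j => ?_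
  calc ‖u i - u j‖ = ‖(w i - w j) + ((u - w) i - (u - w) j)‖ := by
        simp only [Pi.sub_apply]; congr 1; abel
    _ ≤ ‖w i - w j‖ + (‖(u - w) i‖ + ‖(u - w) j‖) :=
        (norm_add_le _ _).trans (add_le_add_right (norm_sub_le _ _) _)
    _ ≤ spread w + (‖u - w‖ + ‖u - w‖) := by
        gcongr
        exacts [norm_sub_le_spread w i j, norm_le_pi_norm _ i, norm_le_pi_norm _ j]
    _ = spread w + 2 * ‖u - w‖ := by ring

variable [NormedSpace ℝ E]

lemma norm_average_sub_le_spread (w : ι → E) (j : ι) :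
    ‖(Fintype.card ι : ℝ)⁻¹ • ∑ i, w i - w j‖ ≤ spread w := by
  have : Nonempty ι := ⟨j⟩
  rw [← mem_closedBall_iff_norm, smul_sum]
  refine (convex_closedBall (w j) (spread w)).sum_mem (fun _ _ => by positivity) ?_
    fun i _ => mem_closedBall_iff_norm.2 (norm_sub_le_spread w i j)
  simp

variable [DecidableEq ι] {M : Matrix ι ι ℝ}

lemma norm_smul_le_of_mem_rowStochastic (hM : M ∈ Matrix.rowStochastic ℝ ι) (w : ι → E) :
    ‖M • w‖ ≤ ‖w‖ := by
  refine (pi_norm_le_iff_of_nonneg (norm_nonneg w)).2 fun i => ?_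
  rw [← mem_closedBall_zero_iff]
  exact (convex_closedBall 0 ‖w‖).sum_mem
    (fun j _ => Matrix.nonneg_of_mem_rowStochastic hM)
    (Matrix.sum_row_of_mem_rowStochastic hM i)
    fun j _ => mem_closedBall_zero_iff.2 (norm_le_pi_norm w j)

-- Row `i` puts mass at least `δ` on `j` itself, so at most `1 - δ` on states other than `w j`.
lemma norm_smul_apply_sub_le (hM : M ∈ Matrix.rowStochastic ℝ ι) {δ : ℝ} {i j : ι}
    (hδ : δ ≤ M i j) (w : ι → E) : ‖(M • w) i - w j‖ ≤ (1 - δ) * spread w := by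
  have hrow : ∑ l, M i l = 1 := Matrix.sum_row_of_mem_rowStochastic hM i
  calc ‖(M • w) i - w j‖ = ‖∑ l, M i l • (w l - w j)‖ := by
        simp only [smul_sub, sum_sub_distrib, ← sum_smul, hrow, one_smul, Matrix.Module.smul_apply]
    _ = ‖∑ l ∈ univ.erase j, M i l • (w l - w j)‖ := by
        rw [sum_erase univ (by rw [sub_self, smul_zero])]
    _ ≤ ∑ l ∈ univ.erase j, M i l * spread w := norm_sum_le_of_le _ fun l _ => by
        rw [norm_smul, Real.norm_of_nonneg (Matrix.nonneg_of_mem_rowStochastic hM)]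
        exact mul_le_mul_of_nonneg_left (norm_sub_le_spread w l j)
          (Matrix.nonneg_of_mem_rowStochastic hM)
    _ = (1 - M i j) * spread w := by
        rw [← sum_mul, sum_erase_eq_sub (mem_univ j), hrow]
    _ ≤ (1 - δ) * spread w := by
        gcongr
        exact spread_nonneg w

lemma spread_smul_le (hM : M ∈ Matrix.rowStochastic ℝ ι) {δ : ℝ} (hδ1 : δ ≤ 1)
    (hδ : ∀ i j, δ ≤ M i j) (w : ι → E) : spread (M • w) ≤ (1 - δ) * spread w := by
  refine spread_le (mul_nonneg (sub_nonneg.2 hδ1) (spread_nonneg w)) fun i j => ?_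
  rw [← mem_closedBall_iff_norm]
  refine (convex_closedBall ((M • w) j) _).sum_mem
    (fun l _ => Matrix.nonneg_of_mem_rowStochastic hM)
    (Matrix.sum_row_of_mem_rowStochastic hM i) fun l _ => ?_
  rw [mem_closedBall_iff_norm']
  exact norm_smul_apply_sub_le hM (hδ j l) w

end Spread

lemma exists_exit_of_reflTransGen {β : Type*} {r : β → β → Prop} {S : Set β} {x z : β}
    (h : Relation.ReflTransGen r x z) (hx : x ∈ S) (hz : z ∉ S) :
    ∃ u ∈ S, ∃ u' ∉ S, r u u' := by
  by_contra! hS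
  have hclosed {y : β} (hy : Relation.ReflTransGen r x y) : y ∈ S := by
    induction hy with
    | refl => exact hx
    | tail _ hbc hb => exact by_contra fun hc => hS _ hb _ hc hbc
  exact hz (hclosed h)

lemma eq_univ_of_forall_ssubset_succ {ι : Type*} [Fintype ι] {S : ℕ → Finset ι} (hS : Monotone S)
    (hgrow : ∀ t, S t ≠ univ → S t ⊂ S (t + 1)) : S (Fintype.card ι) = univ := by
  have hcard : ∀ t, S t = univ ∨ t ≤ #(S t) := by
    intro t
    induction t with
    | zero => exact .inr (Nat.zero_le _)
    | succ t ih =>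
      by_cases ht : S t = univ
      · exact .inl (univ_subset_iff.1 (ht ▸ hS t.le_succ))
      · exact .inr ((ih.resolve_left ht).trans_lt (card_lt_card (hgrow t ht)))
  exact (hcard _).elim id fun h => eq_univ_of_card _ (h.antisymm' (card_le_univ _))

section Transition

variable {ι : Type*}

/-- Joint connectivity over windows of length `Q`: at every time `k` the union of the
communication graphs at times `k + 1, …, k + Q` is strongly connected. An edge `u → u'` means that
`u'` gives positive weight to the state of `u`. -/
def JointlyConnected (A : ℕ → Matrix ι ι ℝ) (Q : ℕ) : Prop :=
  ∀ (k : ℕ) (i j : ι),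
    Relation.ReflTransGen (fun u u' => ∃ l, 1 ≤ l ∧ l ≤ Q ∧ 0 < A (k + l) u' u) i j

variable [Fintype ι] [DecidableEq ι]

/-- The transition matrix `A (k + s) * ⋯ * A (k + 1)` of the network from time `k` to time
`k + s`. -/
def transition (A : ℕ → Matrix ι ι ℝ) (k : ℕ) : ℕ → Matrix ι ι ℝ
  | 0 => 1
  | s + 1 => A (k + s + 1) * transition A k s

variable {A : ℕ → Matrix ι ι ℝ}

lemma transition_mem_rowStochastic (hA : ∀ k, A k ∈ Matrix.rowStochastic ℝ ι) (k s : ℕ) :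
    transition A k s ∈ Matrix.rowStochastic ℝ ι := by
  induction s with
  | zero => exact one_mem _
  | succ s ih => exact mul_mem (hA _) ih

lemma transition_zero_apply (A : ℕ → Matrix ι ι ℝ) (k : ℕ) (i j : ι) :
    transition A k 0 i j = if i = j then 1 else 0 := Matrix.one_apply

lemma transition_nonneg (hA : ∀ k i j, 0 ≤ A k i j) (k s : ℕ) (i j : ι) :
    0 ≤ transition A k s i j := by
  induction s generalizing i with
  | zero =>
    rw [transition_zero_apply]
    exact ite_nonneg zero_le_one le_rfl
  | succ s ih => exact sum_nonneg fun l _ => mul_nonneg (hA _ _ _) (ih l)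

lemma transition_succ_pos_iff (hA : ∀ k i j, 0 ≤ A k i j) {k s : ℕ} {i j : ι} :
    0 < transition A k (s + 1) i j ↔ ∃ l, 0 < A (k + s + 1) i l ∧ 0 < transition A k s l j := by
  rw [transition, Matrix.mul_apply, sum_pos_iff_of_nonneg
    fun l _ => mul_nonneg (hA _ _ _) (transition_nonneg hA _ _ _ _)]
  refine ⟨fun ⟨l, _, hl⟩ => ⟨l, ?_, ?_⟩, fun ⟨l, hl, hl'⟩ => ⟨l, mem_univ l, mul_pos hl hl'⟩⟩
  · exact pos_of_mul_pos_left hl (transition_nonneg hA _ _ _ _)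
  · exact pos_of_mul_pos_right hl (hA _ _ _)

lemma transition_pos_mono (hA : ∀ k i j, 0 ≤ A k i j) (hdiag : ∀ k i, 0 < A k i i) {k s t : ℕ}
    (hst : s ≤ t) {i j : ι} (h : 0 < transition A k s i j) : 0 < transition A k t i j := by
  induction t, hst using Nat.le_induction with
  | base => exact h
  | succ t _ ih => exact (transition_succ_pos_iff hA).2 ⟨i, hdiag _ i, ih⟩

lemma pow_le_transition_of_pos (hA : ∀ k i j, 0 ≤ A k i j) {η : ℝ} (hη : 0 ≤ η)
    (hAη : ∀ k i j, 0 < A k i j → η ≤ A k i j) {k s : ℕ} {i j : ι}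
    (h : 0 < transition A k s i j) : η ^ s ≤ transition A k s i j := by
  induction s generalizing i with
  | zero =>
    rw [transition_zero_apply] at h ⊢
    split_ifs at h ⊢
    · exact (pow_zero η).le
    · exact absurd h (lt_irrefl 0)
  | succ s ih =>
    obtain ⟨l, hAl, hl⟩ := (transition_succ_pos_iff hA).1 h
    calc η ^ (s + 1) = η * η ^ s := pow_succ' η s
      _ ≤ A (k + s + 1) i l * transition A k s l j :=
        mul_le_mul (hAη _ _ _ hAl) (ih hl) (pow_nonneg hη s) hAl.le
      _ ≤ transition A k (s + 1) i j :=
        single_le_sum (f := fun l => A (k + s + 1) i l * transition A k s l j)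
          (fun l _ => mul_nonneg (hA _ _ _) (transition_nonneg hA _ _ _ _)) (mem_univ l)

/-- The agents whose state at time `k + s` depends on the state of agent `j` at time `k`. -/
noncomputable def reached (A : ℕ → Matrix ι ι ℝ) (k : ℕ) (j : ι) (s : ℕ) : Finset ι :=
  {i | 0 < transition A k s i j}

lemma mem_reached {k s : ℕ} {i j : ι} : i ∈ reached A k j s ↔ 0 < transition A k s i j := by
  simp only [reached, mem_filter, mem_univ, true_and]

lemma reached_mono (hA : ∀ k i j, 0 ≤ A k i j) (hdiag : ∀ k i, 0 < A k i i) (k : ℕ) (j : ι) :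
    Monotone (reached A k j) := fun _ _ hst _ hi =>
  mem_reached.2 (transition_pos_mono hA hdiag hst (mem_reached.1 hi))

lemma reached_ssubset_add (hA : ∀ k i j, 0 ≤ A k i j) (hdiag : ∀ k i, 0 < A k i i) {Q : ℕ}
    (hconn : JointlyConnected A Q) {k s : ℕ} {j : ι} (hs : reached A k j s ≠ univ) :
    reached A k j s ⊂ reached A k j (s + Q) := by
  have hmono := reached_mono hA hdiag k j
  have hj : j ∈ reached A k j s := hmono s.zero_le (mem_reached.2 (by simp [transition_zero_apply]))
  obtain ⟨i, hi⟩ : ∃ i, i ∉ reached A k j s := by simpa [eq_univ_iff_forall] using hs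
  obtain ⟨u, hu, u', hu', l, hl, hlQ, hedge⟩ :=
    exists_exit_of_reflTransGen (S := reached A k j s) (hconn (k + s) j i) hj hi
  obtain ⟨l, rfl⟩ := Nat.exists_eq_add_of_le' hl
  have hu'_mem : u' ∈ reached A k j (s + l + 1) :=
    mem_reached.2 ((transition_succ_pos_iff hA).2
      ⟨u, by simpa only [add_assoc] using hedge, mem_reached.1 (hmono (s.le_add_right l) hu)⟩)
  exact Finset.ssubset_iff_subset_ne.2 ⟨hmono (s.le_add_right Q),
    fun h => hu' (mem_coe.2 (h ▸ hmono (Nat.add_le_add_left hlQ s) hu'_mem))⟩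

lemma pow_le_transition (hA : ∀ k i j, 0 ≤ A k i j) (hdiag : ∀ k i, 0 < A k i i) {η : ℝ}
    (hη : 0 ≤ η) (hAη : ∀ k i j, 0 < A k i j → η ≤ A k i j) {Q : ℕ}
    (hconn : JointlyConnected A Q) (k : ℕ) (i j : ι) :
    η ^ (Fintype.card ι * Q) ≤ transition A k (Fintype.card ι * Q) i j := by
  have hall : reached A k j (Fintype.card ι * Q) = univ :=
    eq_univ_of_forall_ssubset_succ (S := fun t => reached A k j (t * Q))
      ((reached_mono hA hdiag k j).comp fun _ _ h => Nat.mul_le_mul_right Q h)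
      fun t ht => by simpa only [add_one_mul] using reached_ssubset_add hA hdiag hconn ht
  exact pow_le_transition_of_pos hA hη hAη (mem_reached.1 (hall ▸ mem_univ i))

end Transition

lemma summable_of_add_le_mul_add {x c : ℕ → ℝ} (hx : ∀ k, 0 ≤ x k) (hc0 : ∀ k, 0 ≤ c k)
    (hc : Summable c) {ρ : ℝ} (hρ : ρ < 1) {B : ℕ} (h : ∀ k, x (k + B) ≤ ρ * x k + c k) :
    Summable x ∧ ∑' k, x k ≤ (∑ k ∈ range B, x k + ∑' k, c k) / (1 - ρ) := by
  have hpartial (N : ℕ) :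
      ∑ k ∈ range N, x k ≤ (∑ k ∈ range B, x k + ∑' k, c k) / (1 - ρ) := by
    rw [le_div_iff₀ (sub_pos.2 hρ)]
    have hsplit : ∑ k ∈ range N, x k ≤ ∑ k ∈ range B, x k + ∑ k ∈ range N, x (k + B) := by
      simp only [add_comm _ B, ← sum_range_add]
      exact sum_le_sum_of_subset_of_nonneg (range_mono (Nat.le_add_left N B)) fun k _ _ => hx k
    have hstep : ∑ k ∈ range N, x (k + B) ≤ ρ * ∑ k ∈ range N, x k + ∑ k ∈ range N, c k := by
      rw [mul_sum, ← sum_add_distrib]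
      exact sum_le_sum fun k _ => h k
    have htsum := hc.sum_le_tsum (range N) fun k _ => hc0 k
    linarith
  exact ⟨summable_of_sum_range_le hx hpartial, Real.tsum_le_of_sum_range_le hx hpartial⟩

lemma summable_mul_of_summable_sq {ι : Type*} {u v : ι → ℝ} (hu : Summable fun k => u k ^ 2)
    (hv : Summable fun k => v k ^ 2) : Summable fun k => u k * v k := by
  refine (hu.add hv).of_norm_bounded fun k => ?_
  rw [Real.norm_eq_abs, abs_mul, ← sq_abs (u k), ← sq_abs (v k)]
  nlinarith [two_mul_le_add_sq |u k| |v k|, sq_nonneg |u k|, sq_nonneg |v k|]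

lemma tendsto_zero_of_summable_sq {u : ℕ → ℝ} (hu : Summable fun k => u k ^ 2) :
    Tendsto u atTop (nhds 0) := by
  rw [tendsto_zero_iff_abs_tendsto_zero, Function.comp_def]
  simpa only [Real.sqrt_sq_eq_abs, Real.sqrt_zero] using hu.tendsto_atTop_zero.sqrt

lemma sum_range_comp_add_le_tsum {d : ℕ → ℝ} (hd : Summable d) (hd0 : ∀ k, 0 ≤ d k) (k s : ℕ) :
    ∑ l ∈ range s, d (k + l) ≤ ∑' l, d l := by
  have htail := ((summable_nat_add_iff k).2 hd).sum_le_tsum (range s) fun l _ => hd0 (l + k)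
  have hsplit := hd.sum_add_tsum_nat_add k
  have hhead : 0 ≤ ∑ l ∈ range k, d l := sum_nonneg fun l _ => hd0 l
  simp only [add_comm k]
  linarith

lemma sq_convexComb_add_le {δ : ℝ} (hδ : 0 < δ) (hδ1 : δ ≤ 1) (x b : ℝ) :
    ((1 - δ) * x + b) ^ 2 ≤ (1 - δ) * x ^ 2 + b ^ 2 / δ := by
  have hgap : (1 - δ) * x ^ 2 + b ^ 2 / δ - ((1 - δ) * x + b) ^ 2
      = (1 - δ) * δ * (x - b / δ) ^ 2 := by
    field_simp
    ring
  have : 0 ≤ (1 - δ) * δ * (x - b / δ) ^ 2 := by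
    have := sub_nonneg.2 hδ1
    positivity
  linarith

section Dynamics

variable {ι E : Type*} [Fintype ι] [DecidableEq ι] [NormedAddCommGroup E] [NormedSpace ℝ E]

/-- How far the step from time `k` to `k + 1` is from pure averaging by `A (k + 1)`, in the
supremum norm over the agents. -/
noncomputable def disturbance (A : ℕ → Matrix ι ι ℝ) (w : ℕ → ι → E) (k : ℕ) : ℝ :=
  ‖w (k + 1) - A (k + 1) • w k‖

variable {A : ℕ → Matrix ι ι ℝ}

lemma norm_sub_transition_smul_le (hA : ∀ k, A k ∈ Matrix.rowStochastic ℝ ι) (w : ℕ → ι → E)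
    (k s : ℕ) :
    ‖w (k + s) - transition A k s • w k‖ ≤ ∑ l ∈ range s, disturbance A w (k + l) := by
  induction s with
  | zero => simp [transition]
  | succ s ih =>
    calc ‖w (k + s + 1) - (A (k + s + 1) * transition A k s) • w k‖
        = ‖A (k + s + 1) • (w (k + s) - transition A k s • w k)
            + (w (k + s + 1) - A (k + s + 1) • w (k + s))‖ := by
          rw [smul_sub, mul_smul]; congr 1; abel
      _ ≤ ‖w (k + s) - transition A k s • w k‖ + disturbance A w (k + s) :=
          (norm_add_le _ _).trans
            (add_le_add_left (norm_smul_le_of_mem_rowStochastic (hA _) _) _)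
      _ ≤ ∑ l ∈ range (s + 1), disturbance A w (k + l) := by
          rw [sum_range_succ]
          gcongr

lemma spread_add_le (hA : ∀ k, A k ∈ Matrix.rowStochastic ℝ ι) (w : ℕ → ι → E) {δ : ℝ}
    (hδ1 : δ ≤ 1) {k s : ℕ} (hδ : ∀ i j, δ ≤ transition A k s i j) :
    spread (w (k + s)) ≤
      (1 - δ) * spread (w k) + 2 * ∑ l ∈ range s, disturbance A w (k + l) :=
  calc spread (w (k + s))
      ≤ spread (transition A k s • w k) + 2 * ‖w (k + s) - transition A k s • w k‖ :=
        spread_le_add_norm_sub _ _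
    _ ≤ (1 - δ) * spread (w k) + 2 * ∑ l ∈ range s, disturbance A w (k + l) := by
        gcongr
        · exact spread_smul_le (transition_mem_rowStochastic hA k s) hδ1 hδ _
        · exact norm_sub_transition_smul_le hA w k s

lemma sq_two_mul_sum_disturbance_le (A : ℕ → Matrix ι ι ℝ) (w : ℕ → ι → E) {d : ℕ → ℝ}
    (hd : ∀ k, disturbance A w k ^ 2 ≤ d k) (k s : ℕ) :
    (2 * ∑ l ∈ range s, disturbance A w (k + l)) ^ 2 ≤ 4 * s * ∑ l ∈ range s, d (k + l) :=
  calc (2 * ∑ l ∈ range s, disturbance A w (k + l)) ^ 2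
      = 4 * (∑ l ∈ range s, disturbance A w (k + l)) ^ 2 := by ring
    _ ≤ 4 * (#(range s) * ∑ l ∈ range s, disturbance A w (k + l) ^ 2) := by
        gcongr
        exact sq_sum_le_card_mul_sum_sq
    _ ≤ 4 * (s * ∑ l ∈ range s, d (k + l)) := by
        rw [card_range]
        gcongr
        exact hd _
    _ = 4 * s * ∑ l ∈ range s, d (k + l) := by ring

lemma spread_sq_add_le (hA : ∀ k, A k ∈ Matrix.rowStochastic ℝ ι) {w : ℕ → ι → E} {d : ℕ → ℝ}
    (hd : ∀ k, disturbance A w k ^ 2 ≤ d k) {δ : ℝ} (hδ0 : 0 < δ) (hδ1 : δ ≤ 1) {k s : ℕ}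
    (hδ : ∀ i j, δ ≤ transition A k s i j) :
    spread (w (k + s)) ^ 2 ≤
      (1 - δ) * spread (w k) ^ 2 + 4 * s / δ * ∑ l ∈ range s, d (k + l) :=
  calc spread (w (k + s)) ^ 2
      ≤ ((1 - δ) * spread (w k) + 2 * ∑ l ∈ range s, disturbance A w (k + l)) ^ 2 :=
        pow_le_pow_left₀ (spread_nonneg _) (spread_add_le hA w hδ1 hδ) 2
    _ ≤ (1 - δ) * spread (w k) ^ 2 + (2 * ∑ l ∈ range s, disturbance A w (k + l)) ^ 2 / δ :=
        sq_convexComb_add_le hδ0 hδ1 _ _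
    _ ≤ (1 - δ) * spread (w k) ^ 2 + 4 * s / δ * ∑ l ∈ range s, d (k + l) := by
        rw [div_mul_eq_mul_div]
        gcongr
        exact sq_two_mul_sum_disturbance_le A w hd k s

lemma spread_sq_le_initial (hA : ∀ k, A k ∈ Matrix.rowStochastic ℝ ι) {w : ℕ → ι → E}
    {d : ℕ → ℝ} (hd : ∀ k, disturbance A w k ^ 2 ≤ d k) (hsum : Summable d) (k : ℕ) :
    spread (w k) ^ 2 ≤ 2 * spread (w 0) ^ 2 + 8 * k * ∑' l, d l := by
  have hfirst := spread_add_le hA w zero_le_one (k := 0) (s := k)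
    fun i j => Matrix.nonneg_of_mem_rowStochastic (transition_mem_rowStochastic hA 0 k)
  rw [zero_add, sub_zero, one_mul] at hfirst
  have hsq := sq_two_mul_sum_disturbance_le A w hd 0 k
  have htsum := sum_range_comp_add_le_tsum hsum (fun l => (sq_nonneg _).trans (hd l)) 0 k
  calc spread (w k) ^ 2
      ≤ (spread (w 0) + 2 * ∑ l ∈ range k, disturbance A w (0 + l)) ^ 2 :=
        pow_le_pow_left₀ (spread_nonneg _) hfirst 2
    _ ≤ 2 * (spread (w 0) ^ 2 + (2 * ∑ l ∈ range k, disturbance A w (0 + l)) ^ 2) := add_sq_le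
    _ ≤ 2 * (spread (w 0) ^ 2 + 4 * k * ∑' l, d l) := by
        gcongr
        exact hsq.trans (by gcongr)
    _ = 2 * spread (w 0) ^ 2 + 8 * k * ∑' l, d l := by ring

lemma summable_spread_sq (hA : ∀ k, A k ∈ Matrix.rowStochastic ℝ ι) {δ : ℝ} (hδ0 : 0 < δ)
    (hδ1 : δ ≤ 1) {B : ℕ} (hδ : ∀ k i j, δ ≤ transition A k B i j) {w : ℕ → ι → E} {d : ℕ → ℝ}
    (hd : ∀ k, disturbance A w k ^ 2 ≤ d k) (hsum : Summable d) :
    Summable (fun k => spread (w k) ^ 2) ∧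
      ∑' k, spread (w k) ^ 2 ≤ (2 * B * spread (w 0) ^ 2
        + (8 * B ^ 2 + 4 * B ^ 2 / δ) * ∑' k, d k) / δ := by
  have hd0 (k : ℕ) : 0 ≤ d k := (sq_nonneg _).trans (hd k)
  have hshift (l : ℕ) : Summable fun k => d (k + l) := (summable_nat_add_iff l).2 hsum
  have hwindow : Summable fun k => ∑ l ∈ range B, d (k + l) := summable_sum fun l _ => hshift l
  have hwindow_tsum : ∑' k, ∑ l ∈ range B, d (k + l) ≤ B * ∑' k, d k := by
    rw [Summable.tsum_finsetSum fun l _ => hshift l]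
    refine (sum_le_card_nsmul _ _ (∑' k, d k) fun l _ => ?_).trans_eq (by simp)
    rw [← hsum.sum_add_tsum_nat_add l]
    exact le_add_of_nonneg_left (sum_nonneg fun k _ => hd0 k)
  have hinitial : ∑ k ∈ range B, spread (w k) ^ 2 ≤
      B * (2 * spread (w 0) ^ 2 + 8 * B * ∑' k, d k) := by
    refine (sum_le_card_nsmul _ _ (2 * spread (w 0) ^ 2 + 8 * B * ∑' k, d k) fun k hk =>
      (spread_sq_le_initial hA hd hsum k).trans ?_).trans_eq (by rw [card_range, nsmul_eq_mul])
    have hkB : k ≤ B := (mem_range.1 hk).le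
    have htsum0 : 0 ≤ ∑' k, d k := tsum_nonneg hd0
    gcongr
  obtain ⟨hsummable, htsum⟩ := summable_of_add_le_mul_add (fun k => sq_nonneg (spread (w k)))
    (fun k => mul_nonneg (by positivity) (sum_nonneg fun l _ => hd0 (k + l)))
    (hwindow.mul_left (4 * B / δ)) (sub_lt_self 1 hδ0)
    fun k => spread_sq_add_le hA hd hδ0 hδ1 (hδ k)
  rw [tsum_mul_left, sub_sub_cancel] at htsum
  refine ⟨hsummable, htsum.trans (div_le_div_of_nonneg_right ?_ hδ0.le)⟩
  calc ∑ k ∈ range B, spread (w k) ^ 2 + 4 * B / δ * ∑' k, ∑ l ∈ range B, d (k + l)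
      ≤ B * (2 * spread (w 0) ^ 2 + 8 * B * ∑' k, d k) + 4 * B / δ * (B * ∑' k, d k) := by
        gcongr
    _ = 2 * B * spread (w 0) ^ 2 + (8 * B ^ 2 + 4 * B ^ 2 / δ) * ∑' k, d k := by ring

theorem exists_spread_sq_le (hA : ∀ k, A k ∈ Matrix.rowStochastic ℝ ι)
    (hdiag : ∀ k i, 0 < A k i i) {η : ℝ} (hη : 0 < η) (hAη : ∀ k i j, 0 < A k i j → η ≤ A k i j)
    {Q : ℕ} (hconn : JointlyConnected A Q) :
    ∃ a b : ℝ, ∀ (w : ℕ → ι → E) (d : ℕ → ℝ), (∀ k, disturbance A w k ^ 2 ≤ d k) → Summable d →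
      Summable (fun k => spread (w k) ^ 2) ∧
        ∀ k, spread (w k) ^ 2 ≤ a * spread (w 0) ^ 2 + b * ∑' l, d l := by
  set B := Fintype.card ι * Q
  set δ := min (η ^ B) 1
  have hA0 (k : ℕ) (i j : ι) : 0 ≤ A k i j := Matrix.nonneg_of_mem_rowStochastic (hA k)
  have hδ (k : ℕ) (i j : ι) : δ ≤ transition A k B i j :=
    (min_le_left _ _).trans (pow_le_transition hA0 hdiag hη.le hAη hconn k i j)
  refine ⟨2 * B / δ, (8 * B ^ 2 + 4 * B ^ 2 / δ) / δ, fun w d hd hsum => ?_⟩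
  obtain ⟨hsummable, htsum⟩ :=
    summable_spread_sq hA (lt_min (pow_pos hη B) one_pos) (min_le_right _ _) hδ hd hsum
  refine ⟨hsummable, fun k => (hsummable.le_tsum k fun l _ => sq_nonneg _).trans
    (htsum.trans_eq ?_)⟩
  ring

end Dynamics

section ProjectedStep

variable {ι E : Type*} [NormedAddCommGroup E] {X : Set E} {P : E → E}

lemma norm_proj_sub_le (hP : ∀ z, ∀ x ∈ X, ‖z - P z‖ ≤ ‖z - x‖) {v : E} (hv : v ∈ X) (z : E) :
    ‖P z - v‖ ≤ 2 * ‖z - v‖ :=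
  calc ‖P z - v‖ ≤ ‖P z - z‖ + ‖z - v‖ := norm_sub_le_norm_sub_add_norm_sub _ _ _
    _ ≤ ‖z - v‖ + ‖z - v‖ := by
        rw [norm_sub_rev (P z)]
        gcongr
        exact hP z v hv
    _ = 2 * ‖z - v‖ := (two_mul _).symm

variable [NormedSpace ℝ E]

lemma norm_proj_step_sub_sq_le (hP : ∀ z, ∀ x ∈ X, ‖z - P z‖ ≤ ‖z - x‖) {v : E} (hv : v ∈ X)
    (t : ℝ) (g e : E) :
    ‖P (v - t • (g + e)) - v‖ ^ 2 ≤ 8 * t ^ 2 * (‖g‖ ^ 2 + ‖e‖ ^ 2) :=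
  calc ‖P (v - t • (g + e)) - v‖ ^ 2 ≤ (2 * ‖v - t • (g + e) - v‖) ^ 2 := by
        gcongr
        exact norm_proj_sub_le hP hv _
    _ = 4 * t ^ 2 * ‖g + e‖ ^ 2 := by
        rw [sub_sub_cancel_left, norm_neg, norm_smul, Real.norm_eq_abs, mul_pow, mul_pow, sq_abs]
        ring
    _ ≤ 4 * t ^ 2 * (2 * (‖g‖ ^ 2 + ‖e‖ ^ 2)) := by
        gcongr
        exact (pow_le_pow_left₀ (norm_nonneg _) (norm_add_le g e) 2).trans add_sq_le
    _ = 8 * t ^ 2 * (‖g‖ ^ 2 + ‖e‖ ^ 2) := by ring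

lemma disturbance_sq_le_of_proj_step [Fintype ι] [DecidableEq ι] (hX : Convex ℝ X)
    (hP : ∀ z, ∀ x ∈ X, ‖z - P z‖ ≤ ‖z - x‖) {g : ι → E → E} {C : ι → ℝ}
    (hC : ∀ i, ∀ x ∈ X, ‖g i x‖ ≤ C i) {A : ℕ → Matrix ι ι ℝ}
    (hA : ∀ k, A k ∈ Matrix.rowStochastic ℝ ι) {w : ℕ → ι → E} {k : ℕ} (hwX : ∀ i, w k i ∈ X)
    {t : ℝ} {e : ι → E}
    (hw : ∀ i, w (k + 1) i =
      P ((A (k + 1) • w k) i - t • (g i ((A (k + 1) • w k) i) + e i))) :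
    disturbance A w k ^ 2 ≤ 8 * t ^ 2 * ∑ i, (C i ^ 2 + ‖e i‖ ^ 2) := by
  have hvX (i : ι) : (A (k + 1) • w k) i ∈ X :=
    hX.sum_mem (fun _ _ => Matrix.nonneg_of_mem_rowStochastic (hA _))
      (Matrix.sum_row_of_mem_rowStochastic (hA _) i) fun j _ => hwX j
  rw [mul_sum]
  refine (pi_norm_sq_le_sum_sq _).trans (sum_le_sum fun i _ => ?_)
  rw [Pi.sub_apply, hw]
  refine (norm_proj_step_sub_sq_le hP (hvX i) _ _ _).trans ?_
  gcongr
  exact hC i _ (hvX i)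

end ProjectedStep

section Probability

lemma integral_le_of_condExp_le {Ω : Type*} {m m₀ : MeasurableSpace Ω} {μ : Measure Ω}
    [IsProbabilityMeasure μ] (hm : m ≤ m₀) {f : Ω → ℝ} {c : ℝ}
    (hf : ∀ᵐ ω ∂μ, (μ[f | m]) ω ≤ c) : ∫ ω, f ω ∂μ ≤ c :=
  calc ∫ ω, f ω ∂μ = ∫ ω, (μ[f | m]) ω ∂μ := (integral_condExp hm).symm
    _ ≤ ∫ _, c ∂μ := integral_mono_ae integrable_condExp (integrable_const c) hf
    _ = c := by simp

variable {Ω : Type*} [MeasurableSpace Ω] {μ : Measure Ω}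

lemma ae_summable_and_integrable_tsum {f : ℕ → Ω → ℝ} (hf0 : ∀ k ω, 0 ≤ f k ω)
    (hf : ∀ k, Integrable (f k) μ) (hsum : Summable fun k => ∫ ω, f k ω ∂μ) :
    (∀ᵐ ω ∂μ, Summable fun k => f k ω) ∧ Integrable (fun ω => ∑' k, f k ω) μ := by
  have hmeas (k : ℕ) : AEMeasurable (fun ω => ENNReal.ofReal (f k ω)) μ :=
    (hf k).aemeasurable.ennreal_ofReal
  have hfin : ∫⁻ ω, ∑' k, ENNReal.ofReal (f k ω) ∂μ ≠ ⊤ := by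
    rw [lintegral_tsum hmeas]
    simp_rw [← ofReal_integral_eq_lintegral_ofReal (hf _) (ae_of_all _ (hf0 _))]
    exact hsum.tsum_ofReal_ne_top
  have htoReal (ω : Ω) : (∑' k, ENNReal.ofReal (f k ω)).toReal = ∑' k, f k ω := by
    simp only [ENNReal.tsum_toReal_eq fun _ => ENNReal.ofReal_ne_top,
      ENNReal.toReal_ofReal (hf0 _ ω)]
  constructor
  · filter_upwards [ae_lt_top' (AEMeasurable.tsum hmeas) hfin] with ω hω
    simpa only [ENNReal.toReal_ofReal (hf0 _ ω)] using ENNReal.summable_toReal hω.ne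
  · simpa only [htoReal] using
      integrable_toReal_of_lintegral_ne_top (AEMeasurable.tsum hmeas) hfin

-- A non-measurable `f k` has integral `0`, so it may be replaced by `0`.
lemma tendsto_integral_zero_of_dominated {f : ℕ → Ω → ℝ} {b : Ω → ℝ} (hb : Integrable b μ)
    (hfb : ∀ᵐ ω ∂μ, ∀ k, ‖f k ω‖ ≤ b ω)
    (hlim : ∀ᵐ ω ∂μ, Tendsto (fun k => f k ω) atTop (nhds 0)) :
    Tendsto (fun k => ∫ ω, f k ω ∂μ) atTop (nhds 0) := by
  classical
  let f' (k : ℕ) : Ω → ℝ := if AEStronglyMeasurable (f k) μ then f k else 0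
  have hf'meas (k : ℕ) : AEStronglyMeasurable (f' k) μ := by
    by_cases h : AEStronglyMeasurable (f k) μ
    · simpa only [f', if_pos h] using h
    · simpa only [f', if_neg h] using aestronglyMeasurable_zero
  have hf'int (k : ℕ) : ∫ ω, f' k ω ∂μ = ∫ ω, f k ω ∂μ := by
    by_cases h : AEStronglyMeasurable (f k) μ
    · simp only [f', if_pos h]
    · simp only [f', if_neg h, integral_non_aestronglyMeasurable h, Pi.zero_apply, integral_zero]
  have hf'le (k : ℕ) (ω : Ω) : ‖f' k ω‖ ≤ ‖f k ω‖ := by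
    by_cases h : AEStronglyMeasurable (f k) μ
    · simp only [f', if_pos h, le_refl]
    · simp only [f', if_neg h, Pi.zero_apply, norm_zero, norm_nonneg]
  have hlim' : ∀ᵐ ω ∂μ, Tendsto (fun k => f' k ω) atTop (nhds 0) := by
    filter_upwards [hlim] with ω hω
    exact squeeze_zero_norm (fun k => hf'le k ω) (tendsto_zero_iff_norm_tendsto_zero.1 hω)
  simpa only [hf'int, integral_zero] using tendsto_integral_of_dominated_convergence b hf'meas hb
    (fun k => hfb.mono fun ω h => (hf'le k ω).trans (h k)) hlim'

variable {ι E : Type*} [Fintype ι] [NormedAddCommGroup E]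

lemma integrable_sum_sq_add [IsFiniteMeasure μ] (C : ι → ℝ) {e : ι → Ω → E}
    (he : ∀ i, Integrable (fun ω => ‖e i ω‖ ^ 2) μ) :
    Integrable (fun ω => ∑ i, (C i ^ 2 + ‖e i ω‖ ^ 2)) μ :=
  integrable_finsetSum univ fun i _ => (integrable_const (C i ^ 2)).add (he i)

lemma integral_sum_sq_add_le [IsFiniteMeasure μ] (C : ι → ℝ) {e : ι → Ω → E}
    (he : ∀ i, Integrable (fun ω => ‖e i ω‖ ^ 2) μ) {ν : ι → ℝ}
    (hν : ∀ i, ∫ ω, ‖e i ω‖ ^ 2 ∂μ ≤ ν i ^ 2) :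
    ∫ ω, ∑ i, (C i ^ 2 + ‖e i ω‖ ^ 2) ∂μ ≤ ∑ i, (μ.real Set.univ * C i ^ 2 + ν i ^ 2) := by
  have hint (i : ι) : Integrable (fun ω => C i ^ 2 + ‖e i ω‖ ^ 2) μ :=
    (integrable_const _).add (he i)
  rw [integral_finsetSum univ fun i _ => hint i]
  gcongr with i
  rw [integral_add (integrable_const _) (he i), integral_const, smul_eq_mul]
  gcongr
  exact hν i

lemma summable_integral_mul_sum_sq [IsFiniteMeasure μ] {α : ℕ → ℝ}
    (hα : Summable fun k => α (k + 1) ^ 2) (C : ι → ℝ) {ε : ι → ℕ → Ω → E}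
    (hε : ∀ i k, Integrable (fun ω => ‖ε i (k + 1) ω‖ ^ 2) μ) {ν : ι → ℝ}
    (hν : ∀ i k, ∫ ω, ‖ε i (k + 1) ω‖ ^ 2 ∂μ ≤ ν i ^ 2) :
    Summable fun k =>
      ∫ ω, 8 * α (k + 1) ^ 2 * ∑ i, (C i ^ 2 + ‖ε i (k + 1) ω‖ ^ 2) ∂μ := by
  simp_rw [integral_const_mul]
  refine .of_nonneg_of_le (fun k => ?_) (fun k => ?_) ((hα.mul_left 8).mul_right
    (∑ i, (μ.real Set.univ * C i ^ 2 + ν i ^ 2)))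
  · exact mul_nonneg (by positivity) (integral_nonneg fun ω => by positivity)
  · gcongr
    exact integral_sum_sq_add_le C (fun i => hε i k) fun i => hν i k

variable [NormedSpace ℝ E]

theorem exists_integrable_spread_sq_bound [DecidableEq ι] [IsFiniteMeasure μ]
    {A : ℕ → Matrix ι ι ℝ} (hA : ∀ k, A k ∈ Matrix.rowStochastic ℝ ι)
    (hdiag : ∀ k i, 0 < A k i i) {η : ℝ} (hη : 0 < η) (hAη : ∀ k i j, 0 < A k i j → η ≤ A k i j)
    {Q : ℕ} (hconn : JointlyConnected A Q) {w : Ω → ℕ → ι → E} {w₀ : ι → E}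
    (hw₀ : ∀ ω, w ω 0 = w₀) {d : ℕ → Ω → ℝ} (hwd : ∀ ω k, disturbance A (w ω) k ^ 2 ≤ d k ω)
    (hd : ∀ k, Integrable (d k) μ) (hsum : Summable fun k => ∫ ω, d k ω ∂μ) :
    ∃ b : Ω → ℝ, Integrable b μ ∧ ∀ᵐ ω ∂μ,
      Summable (fun k => spread (w ω k) ^ 2) ∧ ∀ k, spread (w ω k) ^ 2 ≤ b ω := by
  obtain ⟨p, q, hpq⟩ := exists_spread_sq_le (E := E) hA hdiag hη hAη hconn
  obtain ⟨hd_summable, hd_tsum⟩ := ae_summable_and_integrable_tsum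
    (fun k ω => (sq_nonneg _).trans (hwd ω k)) hd hsum
  refine ⟨fun ω => p * spread w₀ ^ 2 + q * ∑' k, d k ω,
    (integrable_const _).add (hd_tsum.const_mul q), ?_⟩
  filter_upwards [hd_summable] with ω hω
  simpa only [hw₀] using hpq (w ω) (fun k => d k ω) (hwd ω) hω

end Probability

theorem as_and_ms_consensus_general {ι E Ω : Type*} [Fintype ι] [DecidableEq ι]
    [NormedAddCommGroup E] [NormedSpace ℝ E] [MeasurableSpace Ω] (μ : Measure Ω)
    [IsFiniteMeasure μ] {X : Set E} (hX : Convex ℝ X) {P : E → E} (hPmem : ∀ z, P z ∈ X)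
    (hPdist : ∀ z, ∀ x ∈ X, ‖z - P z‖ ≤ ‖z - x‖)
    {g : ι → E → E} {C : ι → ℝ} (hC : ∀ i, ∀ x ∈ X, ‖g i x‖ ≤ C i)
    {A : ℕ → Matrix ι ι ℝ} (hA : ∀ k, A k ∈ Matrix.rowStochastic ℝ ι)
    (hdiag : ∀ k i, 0 < A k i i) {η : ℝ} (hη : 0 < η) (hAη : ∀ k i j, 0 < A k i j → η ≤ A k i j)
    {Q : ℕ} (hconn : JointlyConnected A Q)
    {α : ℕ → ℝ} (hα : Summable fun k => α (k + 1) ^ 2)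
    {ε : ι → ℕ → Ω → E} (hε : ∀ i k, Integrable (fun ω => ‖ε i (k + 1) ω‖ ^ 2) μ)
    {ν : ι → ℝ} (hν : ∀ i k, ∫ ω, ‖ε i (k + 1) ω‖ ^ 2 ∂μ ≤ ν i ^ 2)
    {w v : ι → ℕ → Ω → E} {w₀ : ι → E} (hw₀ : ∀ i ω, w i 0 ω = w₀ i) (hw₀X : ∀ i, w₀ i ∈ X)
    (hv : ∀ i k ω, v i k ω = ∑ j, A (k + 1) i j • w j k ω)
    (hw : ∀ i k ω,
      w i (k + 1) ω = P (v i k ω - α (k + 1) • (g i (v i k ω) + ε i (k + 1) ω)))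
    {y : ℕ → Ω → E} (hy : ∀ k ω, y k ω = (Fintype.card ι : ℝ)⁻¹ • ∑ i, w i k ω) :
    (∀ᵐ ω ∂μ, ∀ j : ι, Summable fun k => α (k + 2) * ‖y (k + 1) ω - w j (k + 1) ω‖) ∧
      (∀ j : ι,
        (∀ᵐ ω ∂μ, Tendsto (fun k => ‖y (k + 1) ω - w j (k + 1) ω‖) atTop (nhds 0)) ∧
          Tendsto (fun k => ∫ ω, ‖y (k + 1) ω - w j (k + 1) ω‖ ^ 2 ∂μ) atTop (nhds 0)) := by
  have hwX (ω : Ω) (k : ℕ) (i : ι) : w i k ω ∈ X := by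
    cases k with
    | zero => exact hw₀ i ω ▸ hw₀X i
    | succ k => exact hw i k ω ▸ hPmem _
  have hdisturbance (ω : Ω) (k : ℕ) : disturbance A (fun k i => w i k ω) k ^ 2 ≤
      8 * α (k + 1) ^ 2 * ∑ i, (C i ^ 2 + ‖ε i (k + 1) ω‖ ^ 2) :=
    disturbance_sq_le_of_proj_step hX hPdist hC hA (hwX ω k) fun i => by
      simpa only [hv, Matrix.Module.smul_apply] using hw i k ω
  obtain ⟨b, hb, hspread⟩ := exists_integrable_spread_sq_bound hA hdiag hη hAη hconn
    (fun ω => funext fun i => hw₀ i ω) hdisturbance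
    (fun k => (integrable_sum_sq_add C fun i => hε i k).const_mul _)
    (summable_integral_mul_sum_sq hα C hε hν)
  have hgap (j : ι) (k : ℕ) (ω : Ω) :
      ‖y k ω - w j k ω‖ ^ 2 ≤ spread (fun i => w i k ω) ^ 2 := by
    rw [hy]
    gcongr
    exact norm_average_sub_le_spread (fun i => w i k ω) j
  have hsummable : ∀ᵐ ω ∂μ, ∀ j, Summable fun k => ‖y (k + 1) ω - w j (k + 1) ω‖ ^ 2 := by
    filter_upwards [hspread] with ω hω j
    exact .of_nonneg_of_le (fun k => sq_nonneg _) (fun k => hgap j (k + 1) ω)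
      ((summable_nat_add_iff 1).2 hω.1)
  refine ⟨?_, fun j => ⟨?_, tendsto_integral_zero_of_dominated hb ?_ ?_⟩⟩
  · filter_upwards [hsummable] with ω hω j
    exact summable_mul_of_summable_sq (hα.comp_injective (add_left_injective 1)) (hω j)
  · filter_upwards [hsummable] with ω hω
    exact tendsto_zero_of_summable_sq (hω j)
  · filter_upwards [hspread] with ω hω k
    rw [Real.norm_of_nonneg (sq_nonneg _)]
    exact (hgap j (k + 1) ω).trans (hω.2 (k + 1))
  · filter_upwards [hsummable] with ω hω
    exact (hω j).tendsto_atTop_zero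

/-- Theorem 6.1 (almost sure and mean-square consensus): with `X` nonempty closed convex,
the connectivity and doubly stochastic weight assumptions, uniform subgradient bounds
`‖∇f_i(x)‖ ≤ C_i` on `X`, conditional second-moment bounds `E[‖ε_{i,k+1}‖² | F_k] ≤ ν_i²`
a.s. (where `F_k` is the σ-algebra generated by the errors up to time `k`), and
`∑_k α_{k+1}² < ∞`, we have: with probability 1,
`∑_{k≥1} α_{k+2} ‖y_{k+1} − w_{j,k+1}‖ < ∞` for all `j`; moreover, for all `j`,
`‖y_{k+1} − w_{j,k+1}‖ → 0` with probability 1 and in mean square. -/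
theorem as_and_ms_consensus {n m Q : ℕ} (hm : 0 < m) (hQ : 1 ≤ Q)
    {Ω : Type*} [MeasurableSpace Ω] (μ : Measure Ω) [IsProbabilityMeasure μ]
    (X : Set (EuclideanSpace ℝ (Fin n))) (hXne : X.Nonempty)
    (hXcl : IsClosed X) (hXcv : Convex ℝ X)
    -- Euclidean projection onto X
    (P : EuclideanSpace ℝ (Fin n) → EuclideanSpace ℝ (Fin n))
    (hPmem : ∀ z, P z ∈ X)
    (hPdist : ∀ z, ∀ x ∈ X, ‖z - P z‖ ≤ ‖z - x‖)
    -- subgradients, uniformly bounded over X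
    (g : Fin m → EuclideanSpace ℝ (Fin n) → EuclideanSpace ℝ (Fin n))
    (C : Fin m → ℝ) (hC : ∀ i, ∀ x ∈ X, ‖g i x‖ ≤ C i)
    -- weights: doubly stochastic, uniformly positive entries
    (a : ℕ → Fin m → Fin m → ℝ)
    (hann : ∀ k i j, 0 ≤ a k i j)
    (harow : ∀ k i, ∑ j, a k i j = 1)
    (hacol : ∀ k j, ∑ i, a k i j = 1)
    (η : ℝ) (hη0 : 0 < η) (hη1 : η < 1)
    (haη : ∀ k i j, 0 < a k i j → η ≤ a k i j)
    (haself : ∀ k i, η ≤ a k i i)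
    -- Q-step strong connectivity
    (hconn : ∀ k : ℕ, ∀ i j : Fin m,
      Relation.ReflTransGen (fun u u' => ∃ l, 1 ≤ l ∧ l ≤ Q ∧ 0 < a (k + l) u' u) i j)
    -- square-summable stepsizes
    (α : ℕ → ℝ) (hα : ∀ k, 0 < α k)
    (hα2 : Summable fun k => α (k + 1) ^ 2)
    -- stochastic errors, their natural filtration, and conditional second-moment bounds
    (ε : Fin m → ℕ → Ω → EuclideanSpace ℝ (Fin n))
    (hεmeas : ∀ i k, Measurable (ε i k))
    (hεint : ∀ i k, Integrable (fun ω => ‖ε i k ω‖ ^ 2) μ)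
    (F : ℕ → MeasurableSpace Ω)
    (hF : ∀ k, F k = ⨆ (i : Fin m) (ℓ : ℕ) (_ : ℓ ≤ k),
      MeasurableSpace.comap (fun ω => ε i ℓ ω) inferInstance)
    (ν : Fin m → ℝ)
    (hν : ∀ i k, ∀ᵐ ω ∂μ, (μ[fun ω' => ‖ε i (k + 1) ω'‖ ^ 2|F k]) ω ≤ ν i ^ 2)
    -- the algorithm (pathwise), with deterministic initial points in X
    (w v : Fin m → ℕ → Ω → EuclideanSpace ℝ (Fin n))
    (w₀ : Fin m → EuclideanSpace ℝ (Fin n))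
    (hw0 : ∀ i ω, w i 0 ω = w₀ i) (hw0X : ∀ i, w₀ i ∈ X)
    (hv : ∀ i k ω, v i k ω = ∑ j, a (k + 1) i j • w j k ω)
    (hw : ∀ i k ω,
      w i (k + 1) ω = P (v i k ω - α (k + 1) • (g i (v i k ω) + ε i (k + 1) ω)))
    (y : ℕ → Ω → EuclideanSpace ℝ (Fin n))
    (hy : ∀ k ω, y k ω = (m : ℝ)⁻¹ • ∑ i, w i k ω) :
    (∀ᵐ ω ∂μ, ∀ j : Fin m,
        Summable fun k => α (k + 2) * ‖y (k + 1) ω - w j (k + 1) ω‖) ∧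
      (∀ j : Fin m,
        (∀ᵐ ω ∂μ, Tendsto (fun k => ‖y (k + 1) ω - w j (k + 1) ω‖) atTop (nhds 0)) ∧
          Tendsto (fun k => ∫ ω, ‖y (k + 1) ω - w j (k + 1) ω‖ ^ 2 ∂μ) atTop (nhds 0)) := by
  have hFle (k : ℕ) : F k ≤ ‹MeasurableSpace Ω› := by
    rw [hF]
    exact iSup_le fun i => iSup₂_le fun ℓ _ => (hεmeas i ℓ).comap_le
  exact as_and_ms_consensus_general μ hXcv hPmem hPdist hC
    (fun k => Matrix.mem_rowStochastic_iff_sum.2 ⟨hann k, harow k⟩)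
    (fun k i => hη0.trans_le (haself k i)) hη0 haη hconn hα2 (fun i k => hεint i (k + 1))
    (fun i k => integral_le_of_condExp_le (hFle k) (hν i k)) hw0 hw0X hv hw
    (by simpa only [Fintype.card_fin] using hy)
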